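/- arXiv:2001.10116 — 2 statements merged into one kernel-verified Lean document; each statement's English description precedes it below -/
import Mathlib

section
/- Let n = 5k with k ≥ 2 an integer. Consider the position of n-Sim in which the n vertices are partitioned into k sets of 5 vertices, the complete graph on each of these 5-sets is colored as a drawn K_5, all edges joining vertices in different 5-sets are uncolored, and it is PI's turn to move. Then PII has a winning strategy from this position. -/
/-- The set of valid (non-loop) edges of the complete graph on `Fin n`. -/
def simEdges (n : ℕ) : Finset (Sym2 (Fin n)) :=
  Finset.univ.filter (fun e => ¬ e.IsDiag)

/-- An edge set `S` contains a triangle: three edges of `S` spanned by three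
distinct vertices. -/
def HasTriangle {n : ℕ} (S : Finset (Sym2 (Fin n))) : Prop :=
  ∃ a b c : Fin n, a ≠ b ∧ a ≠ c ∧ b ≠ c ∧
    s(a, b) ∈ S ∧ s(a, c) ∈ S ∧ s(b, c) ∈ S

/-- The uncolored edges, given the two players' edge sets. -/
def avail {n : ℕ} (A B : Finset (Sym2 (Fin n))) : Finset (Sym2 (Fin n)) :=
  simEdges n \ (A ∪ B)

/-- `MoverWins own opp` : in the game of n-Sim (players alternately claim an
uncolored edge of `K n`, and whoever first has a triangle in their own edges
loses), the player about to move, whose already-claimed edges are `own` while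
the opponent's are `opp`, has a winning strategy.

The mover wins iff they can claim some uncolored edge `e` not creating a
triangle in their own color, so that afterwards the opponent still has to move
(there is an uncolored edge left; otherwise the game is a draw), and every
reply `f` of the opponent either completes a triangle in the opponent's color
(so the opponent loses) or leads to a position where the original mover again
wins. -/
inductive MoverWins {n : ℕ} : Finset (Sym2 (Fin n)) → Finset (Sym2 (Fin n)) → Prop where
  | step (own opp : Finset (Sym2 (Fin n))) (e : Sym2 (Fin n))
      (he : e ∈ avail own opp)
      (hsafe : ¬ HasTriangle (insert e own))
      (hne : (avail opp (insert e own)).Nonempty)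
      (hreplies : ∀ f ∈ avail opp (insert e own), ¬ HasTriangle (insert f opp) →
        MoverWins (insert e own) (insert f opp)) :
      MoverWins own opp

/-- `NonMoverWins own opp` : the player NOT about to move (the one whose edges
are `opp`) has a winning strategy: there is at least one uncolored edge (the
mover must move), and every non-losing move of the mover leads to a position
won by the (new) mover, i.e. by the original non-mover. -/
def NonMoverWins {n : ℕ} (own opp : Finset (Sym2 (Fin n))) : Prop :=
  (avail own opp).Nonempty ∧
    ∀ e ∈ avail own opp, ¬ HasTriangle (insert e own) →
      MoverWins opp (insert e own)

/-- The green edges of a drawn `K₅` on the five distinct vertices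
`v 0, …, v 4`: the pentagon `v i — v (i+1)`. -/
def greenK5 {n : ℕ} (v : Fin 5 → Fin n) : Finset (Sym2 (Fin n)) :=
  Finset.univ.image (fun i : Fin 5 => s(v i, v (i + 1)))

/-- The red edges of a drawn `K₅` on the five distinct vertices
`v 0, …, v 4`: the complementary pentagram `v i — v (i+2)`. -/
def redK5 {n : ℕ} (v : Fin 5 → Fin n) : Finset (Sym2 (Fin n)) :=
  Finset.univ.image (fun i : Fin 5 => s(v i, v (i + 2)))

/-- Triangles are monotone. -/
theorem HasTriangle.mono' {n : ℕ} {S T : Finset (Sym2 (Fin n))} (h : S ⊆ T)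
    (hS : HasTriangle S) : HasTriangle T := by
  obtain ⟨a, b, c, h1, h2, h3, h4, h5, h6⟩ := hS
  exact ⟨a, b, c, h1, h2, h3, h h4, h h5, h h6⟩

theorem mem_avail' {n : ℕ} {A B : Finset (Sym2 (Fin n))} {e : Sym2 (Fin n)} :
    e ∈ avail A B ↔ ¬ e.IsDiag ∧ e ∉ A ∧ e ∉ B := by
  simp [avail, simEdges]

theorem moverWins_iff {n : ℕ} (own opp : Finset (Sym2 (Fin n))) :
    MoverWins own opp ↔ ∃ e ∈ avail own opp, ¬ HasTriangle (insert e own) ∧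
      NonMoverWins opp (insert e own) := by
  constructor
  · rintro ⟨_, _, e, he, hs, hne, hr⟩
    exact ⟨e, he, hs, hne, hr⟩
  · rintro ⟨e, he, hs, hne, hr⟩
    exact MoverWins.step own opp e he hs hne hr

theorem avail_card_lt {n : ℕ} {own opp : Finset (Sym2 (Fin n))} {e : Sym2 (Fin n)}
    (he : e ∈ avail own opp) : (avail opp (insert e own)).card < (avail own opp).card := by
  apply Finset.card_lt_card
  rw [Finset.ssubset_iff_of_subset]
  · exact ⟨e, he, by simp [mem_avail']⟩
  · intro f
    simp only [mem_avail', Finset.mem_insert]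
    tauto

/-- Three edges of colour `S` at a vertex. -/
theorem ramsey_aux {n : ℕ} {S T : Finset (Sym2 (Fin n))}
    (hall : ∀ a b : Fin n, a ≠ b → s(a, b) ∈ S ∨ s(a, b) ∈ T)
    (hS : ¬ HasTriangle S) (hT : ¬ HasTriangle T) {x a b c : Fin n}
    (xa : x ≠ a) (xb : x ≠ b) (xc : x ≠ c) (ab : a ≠ b) (ac : a ≠ c) (bc : b ≠ c)
    (ha : s(x, a) ∈ S) (hb : s(x, b) ∈ S) (hc : s(x, c) ∈ S) : False := by
  have h1 : s(a, b) ∈ T := (hall a b ab).resolve_left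
    fun h => hS ⟨x, a, b, xa, xb, ab, ha, hb, h⟩
  have h2 : s(a, c) ∈ T := (hall a c ac).resolve_left
    fun h => hS ⟨x, a, c, xa, xc, ac, ha, hc, h⟩
  have h3 : s(b, c) ∈ T := (hall b c bc).resolve_left
    fun h => hS ⟨x, b, c, xb, xc, bc, hb, hc, h⟩
  exact hT ⟨a, b, c, ab, ac, bc, h1, h2, h3⟩

/-- No draws: `R(3,3) = 6`. -/
theorem avail_nonempty {n : ℕ} (hn : 6 ≤ n) {S T : Finset (Sym2 (Fin n))}
    (hS : ¬ HasTriangle S) (hT : ¬ HasTriangle T) : (avail S T).Nonempty := by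
  by_contra hne
  have hall : ∀ a b : Fin n, a ≠ b → s(a, b) ∈ S ∨ s(a, b) ∈ T := by
    intro a b hab
    by_contra hcon
    push Not at hcon
    exact hne ⟨s(a, b), mem_avail'.2 ⟨by simpa using hab, hcon.1, hcon.2⟩⟩
  have hall' : ∀ a b : Fin n, a ≠ b → s(a, b) ∈ T ∨ s(a, b) ∈ S :=
    fun a b h => (hall a b h).symm
  have key : ∀ i j : Fin 6, i ≠ j → Fin.castLE hn i ≠ Fin.castLE hn j := by
    intro i j hij h
    exact hij (Fin.castLE_injective hn h)
  have kS : ∀ a b c : Fin 6, 0 ≠ a → 0 ≠ b → 0 ≠ c → a ≠ b → a ≠ c → b ≠ c →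
      s(Fin.castLE hn 0, Fin.castLE hn a) ∈ S → s(Fin.castLE hn 0, Fin.castLE hn b) ∈ S →
      s(Fin.castLE hn 0, Fin.castLE hn c) ∈ S → False := fun a b c h1 h2 h3 h4 h5 h6 =>
    ramsey_aux hall hS hT (key _ _ h1) (key _ _ h2) (key _ _ h3) (key _ _ h4) (key _ _ h5)
      (key _ _ h6)
  have kT : ∀ a b c : Fin 6, 0 ≠ a → 0 ≠ b → 0 ≠ c → a ≠ b → a ≠ c → b ≠ c →
      s(Fin.castLE hn 0, Fin.castLE hn a) ∈ T → s(Fin.castLE hn 0, Fin.castLE hn b) ∈ T →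
      s(Fin.castLE hn 0, Fin.castLE hn c) ∈ T → False := fun a b c h1 h2 h3 h4 h5 h6 =>
    ramsey_aux hall' hT hS (key _ _ h1) (key _ _ h2) (key _ _ h3) (key _ _ h4) (key _ _ h5)
      (key _ _ h6)
  have s123 := kS 1 2 3 (by decide) (by decide) (by decide) (by decide) (by decide) (by decide)
  have s124 := kS 1 2 4 (by decide) (by decide) (by decide) (by decide) (by decide) (by decide)
  have s125 := kS 1 2 5 (by decide) (by decide) (by decide) (by decide) (by decide) (by decide)
  have s134 := kS 1 3 4 (by decide) (by decide) (by decide) (by decide) (by decide) (by decide)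
  have s135 := kS 1 3 5 (by decide) (by decide) (by decide) (by decide) (by decide) (by decide)
  have s145 := kS 1 4 5 (by decide) (by decide) (by decide) (by decide) (by decide) (by decide)
  have s234 := kS 2 3 4 (by decide) (by decide) (by decide) (by decide) (by decide) (by decide)
  have s235 := kS 2 3 5 (by decide) (by decide) (by decide) (by decide) (by decide) (by decide)
  have s245 := kS 2 4 5 (by decide) (by decide) (by decide) (by decide) (by decide) (by decide)
  have s345 := kS 3 4 5 (by decide) (by decide) (by decide) (by decide) (by decide) (by decide)
  have t123 := kT 1 2 3 (by decide) (by decide) (by decide) (by decide) (by decide) (by decide)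
  have t124 := kT 1 2 4 (by decide) (by decide) (by decide) (by decide) (by decide) (by decide)
  have t125 := kT 1 2 5 (by decide) (by decide) (by decide) (by decide) (by decide) (by decide)
  have t134 := kT 1 3 4 (by decide) (by decide) (by decide) (by decide) (by decide) (by decide)
  have t135 := kT 1 3 5 (by decide) (by decide) (by decide) (by decide) (by decide) (by decide)
  have t145 := kT 1 4 5 (by decide) (by decide) (by decide) (by decide) (by decide) (by decide)
  have t234 := kT 2 3 4 (by decide) (by decide) (by decide) (by decide) (by decide) (by decide)
  have t235 := kT 2 3 5 (by decide) (by decide) (by decide) (by decide) (by decide) (by decide)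
  have t245 := kT 2 4 5 (by decide) (by decide) (by decide) (by decide) (by decide) (by decide)
  have t345 := kT 3 4 5 (by decide) (by decide) (by decide) (by decide) (by decide) (by decide)
  clear kS kT
  have c1 := hall _ _ (key 0 1 (by decide))
  have c2 := hall _ _ (key 0 2 (by decide))
  have c3 := hall _ _ (key 0 3 (by decide))
  have c4 := hall _ _ (key 0 4 (by decide))
  have c5 := hall _ _ (key 0 5 (by decide))
  rcases c1 with c1 | c1 <;> rcases c2 with c2 | c2 <;> rcases c3 with c3 | c3 <;>
    rcases c4 with c4 | c4 <;> rcases c5 with c5 | c5 <;>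
  first
    | exact s123 c1 c2 c3
    | exact s124 c1 c2 c4
    | exact s125 c1 c2 c5
    | exact s134 c1 c3 c4
    | exact s135 c1 c3 c5
    | exact s145 c1 c4 c5
    | exact s234 c2 c3 c4
    | exact s235 c2 c3 c5
    | exact s245 c2 c4 c5
    | exact s345 c3 c4 c5
    | exact t123 c1 c2 c3
    | exact t124 c1 c2 c4
    | exact t125 c1 c2 c5
    | exact t134 c1 c3 c4
    | exact t135 c1 c3 c5
    | exact t145 c1 c4 c5
    | exact t234 c2 c3 c4
    | exact t235 c2 c3 c5
    | exact t245 c2 c4 c5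
    | exact t345 c3 c4 c5

/-- Determinacy (there are no draws). -/
theorem determined {n : ℕ} (hn : 6 ≤ n) : ∀ (m : ℕ) (own opp : Finset (Sym2 (Fin n))),
    (avail own opp).card ≤ m → ¬ HasTriangle own → ¬ HasTriangle opp →
    MoverWins own opp ∨ NonMoverWins own opp := by
  intro m
  induction m with
  | zero =>
    intro own opp hm h1 h2
    have := (avail_nonempty hn h1 h2).card_pos
    omega
  | succ m ih =>
    intro own opp hm h1 h2
    by_contra hcon
    push Not at hcon
    obtain ⟨hM, hN⟩ := hcon
    apply hN
    refine ⟨avail_nonempty hn h1 h2, fun e he hs => ?_⟩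
    have hlt := avail_card_lt he
    rcases ih opp (insert e own) (by omega) h2 hs with h | h
    · exact h
    · exact absurd ((moverWins_iff _ _).2 ⟨e, he, hs, h⟩) hM

/-- The two players cannot both win. -/
theorem not_both {n : ℕ} {own opp : Finset (Sym2 (Fin n))} (h : MoverWins own opp) :
    ¬ NonMoverWins own opp := by
  induction h with
  | step own opp e he hs hne hr ih =>
    intro hN
    obtain ⟨f, hf, hfs, hfN⟩ := (moverWins_iff _ _).1 (hN.2 e he hs)
    exact ih f hf hfs hfN

/-- If the non-mover wins, and `c` is an edge that the non-mover can never take, then the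
non-mover still wins after the mover is given `c` for free. -/
theorem give_dead {n : ℕ} (hn : 6 ≤ n) (c : Sym2 (Fin n)) :
    ∀ (m : ℕ) (own opp : Finset (Sym2 (Fin n))),
    (avail own opp).card ≤ m → ¬ HasTriangle (insert c own) → ¬ HasTriangle opp →
    HasTriangle (insert c opp) → NonMoverWins own opp → NonMoverWins (insert c own) opp := by
  intro m
  induction m using Nat.strong_induction_on with
  | _ m ih =>
    intro own opp hm h1 h2 hc hN
    refine ⟨avail_nonempty hn h1 h2, fun w hw hws => ?_⟩
    rw [mem_avail', Finset.mem_insert, not_or] at hw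
    have hw' : w ∈ avail own opp := mem_avail'.2 ⟨hw.1, hw.2.1.2, hw.2.2⟩
    have hsub : insert w own ⊆ insert w (insert c own) :=
      Finset.insert_subset_insert _ (Finset.subset_insert _ _)
    obtain ⟨l, hl, hls, hlN⟩ := (moverWins_iff _ _).1
      (hN.2 w hw' fun h => hws (h.mono' hsub))
    have hlc : l ≠ c := by
      rintro rfl
      exact hls hc
    have hlt1 := avail_card_lt hw'
    have hlt2 := avail_card_lt hl
    have key := ih (avail (insert w own) (insert l opp)).card (by omega) (insert w own)
      (insert l opp) le_rfl (by rwa [Finset.insert_comm]) hls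
      (hc.mono' (Finset.insert_subset_insert _ (Finset.subset_insert _ _))) hlN
    rw [Finset.insert_comm] at key
    rw [mem_avail'] at hl
    refine (moverWins_iff _ _).2 ⟨l, mem_avail'.2 ⟨hl.1, hl.2.1, ?_⟩, hls, key⟩
    simp only [Finset.mem_insert, not_or] at hl ⊢
    exact ⟨hl.2.2.1, hlc, hl.2.2.2⟩

/-- The action of a vertex permutation on edge sets. -/
def permEdges {n : ℕ} (σ : Equiv.Perm (Fin n)) (S : Finset (Sym2 (Fin n))) :
    Finset (Sym2 (Fin n)) := S.image (Sym2.map σ)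

theorem permEdges_insert {n : ℕ} (σ : Equiv.Perm (Fin n)) (e : Sym2 (Fin n))
    (S : Finset (Sym2 (Fin n))) :
    permEdges σ (insert e S) = insert (e.map σ) (permEdges σ S) := by
  simp [permEdges]

theorem map_mem_permEdges {n : ℕ} (σ : Equiv.Perm (Fin n)) (e : Sym2 (Fin n))
    (S : Finset (Sym2 (Fin n))) : e.map σ ∈ permEdges σ S ↔ e ∈ S :=
  (Sym2.map.injective σ.injective).mem_finset_image

theorem hasTriangle_perm {n : ℕ} (σ : Equiv.Perm (Fin n)) (S : Finset (Sym2 (Fin n))) :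
    HasTriangle (permEdges σ S) ↔ HasTriangle S := by
  have key : ∀ a b : Fin n, s(σ a, σ b) ∈ permEdges σ S ↔ s(a, b) ∈ S := fun a b =>
    map_mem_permEdges σ s(a, b) S
  constructor
  · rintro ⟨a, b, c, h⟩
    obtain ⟨a, rfl⟩ := σ.surjective a
    obtain ⟨b, rfl⟩ := σ.surjective b
    obtain ⟨c, rfl⟩ := σ.surjective c
    simp only [key, ne_eq, EmbeddingLike.apply_eq_iff_eq] at h
    exact ⟨a, b, c, h⟩
  · rintro ⟨a, b, c, h⟩
    refine ⟨σ a, σ b, σ c, ?_⟩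
    simpa only [key, ne_eq, EmbeddingLike.apply_eq_iff_eq] using h

theorem map_mem_avail {n : ℕ} (σ : Equiv.Perm (Fin n)) (e : Sym2 (Fin n))
    (A B : Finset (Sym2 (Fin n))) :
    e.map σ ∈ avail (permEdges σ A) (permEdges σ B) ↔ e ∈ avail A B := by
  simp only [mem_avail', map_mem_permEdges]
  rw [Sym2.isDiag_map σ.injective]

theorem exists_map_eq {n : ℕ} (σ : Equiv.Perm (Fin n)) (f : Sym2 (Fin n)) :
    ∃ e, Sym2.map σ e = f := by
  refine ⟨f.map σ.symm, ?_⟩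
  rw [Sym2.map_map]
  simp

theorem moverWins_perm {n : ℕ} (σ : Equiv.Perm (Fin n)) {own opp : Finset (Sym2 (Fin n))}
    (h : MoverWins own opp) : MoverWins (permEdges σ own) (permEdges σ opp) := by
  induction h with
  | step own opp e he hs hne hr ih =>
    refine MoverWins.step _ _ (e.map σ) ((map_mem_avail σ _ _ _).2 he) ?_ ?_ ?_
    · rwa [← permEdges_insert, hasTriangle_perm]
    · obtain ⟨f, hf⟩ := hne
      exact ⟨f.map σ, by rw [← permEdges_insert]; exact (map_mem_avail σ _ _ _).2 hf⟩
    · intro f hf hfs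
      obtain ⟨f, rfl⟩ := exists_map_eq σ f
      rw [← permEdges_insert] at hf hfs ⊢
      rw [← permEdges_insert]
      rw [hasTriangle_perm] at hfs
      exact ih f ((map_mem_avail σ _ _ _).1 hf) hfs

theorem nonMoverWins_perm {n : ℕ} (σ : Equiv.Perm (Fin n)) {own opp : Finset (Sym2 (Fin n))}
    (h : NonMoverWins own opp) : NonMoverWins (permEdges σ own) (permEdges σ opp) := by
  refine ⟨?_, ?_⟩
  · obtain ⟨f, hf⟩ := h.1
    exact ⟨f.map σ, (map_mem_avail σ _ _ _).2 hf⟩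
  · intro f hf hfs
    obtain ⟨f, rfl⟩ := exists_map_eq σ f
    rw [← permEdges_insert] at hfs ⊢
    rw [hasTriangle_perm] at hfs
    exact moverWins_perm σ (h.2 f ((map_mem_avail σ _ _ _).1 hf) hfs)

theorem mem_green {n k : ℕ} (v : Fin k → Fin 5 → Fin n) (e : Sym2 (Fin n)) :
    e ∈ (Finset.univ.biUnion fun i => greenK5 (v i)) ↔ ∃ i t, s(v i t, v i (t + 1)) = e := by
  simp [greenK5]

theorem mem_red {n k : ℕ} (v : Fin k → Fin 5 → Fin n) (e : Sym2 (Fin n)) :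
    e ∈ (Finset.univ.biUnion fun i => redK5 (v i)) ↔ ∃ i t, s(v i t, v i (t + 2)) = e := by
  simp [redK5]

theorem fin5_aux1 : ∀ t a : Fin 5, 2 * (t + 1) + a = (2 * t + a) + 2 := by decide
theorem fin5_aux2 : ∀ t a : Fin 5, 2 * t + a = (2 * (t + 2) + a) + 1 := by decide
theorem fin5_aux3 : ∀ t a : Fin 5, 2 * (3 * (t - a)) + a = t := by decide
theorem fin5_aux4 : ∀ t a : Fin 5, 3 * ((2 * t + a) - a) = t := by decide
theorem fin5_aux5 : ∀ x y : Fin 5, x ≠ y → y = x + 1 ∨ x = y + 1 ∨ y = x + 2 ∨ x = y + 2 := by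
  decide
theorem fin5_aux6 : ∀ x : Fin 5, 2 * x + -x = x := by decide
theorem fin5_aux7 : ∀ x : Fin 5, 2 * x + (1 - x) = x + 1 := by decide
theorem fin5_aux8 : ∀ x : Fin 5, x ≠ x + 1 := by decide

/-- The block-preserving permutation acting on block `i` as `t ↦ 2 t + a i`. -/
def blockPerm {k : ℕ} (a : Fin k → Fin 5) : Equiv.Perm (Fin k × Fin 5) where
  toFun p := (p.1, 2 * p.2 + a p.1)
  invFun p := (p.1, 3 * (p.2 - a p.1))
  left_inv p := Prod.ext rfl (fin5_aux4 _ _)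
  right_inv p := Prod.ext rfl (fin5_aux3 _ _)

theorem permEdges_green {n k : ℕ} (v : Fin k → Fin 5 → Fin n) (σ : Equiv.Perm (Fin n))
    (a : Fin k → Fin 5) (hσ : ∀ i t, σ (v i t) = v i (2 * t + a i)) :
    permEdges σ (Finset.univ.biUnion fun i => greenK5 (v i)) =
      Finset.univ.biUnion fun i => redK5 (v i) := by
  ext f
  obtain ⟨f, rfl⟩ := exists_map_eq σ f
  rw [map_mem_permEdges, mem_green, mem_red]
  constructor
  · rintro ⟨i, t, rfl⟩
    exact ⟨i, 2 * t + a i, by rw [Sym2.map_mk, hσ, hσ, fin5_aux1]⟩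
  · rintro ⟨i, t, h⟩
    refine ⟨i, 3 * (t - a i), Sym2.map.injective σ.injective ?_⟩
    rw [← h, Sym2.map_mk, hσ, hσ, fin5_aux1, fin5_aux3]

theorem permEdges_red {n k : ℕ} (v : Fin k → Fin 5 → Fin n) (σ : Equiv.Perm (Fin n))
    (a : Fin k → Fin 5) (hσ : ∀ i t, σ (v i t) = v i (2 * t + a i)) :
    permEdges σ (Finset.univ.biUnion fun i => redK5 (v i)) =
      Finset.univ.biUnion fun i => greenK5 (v i) := by
  ext f
  obtain ⟨f, rfl⟩ := exists_map_eq σ f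
  rw [map_mem_permEdges, mem_green, mem_red]
  constructor
  · rintro ⟨i, t, rfl⟩
    exact ⟨i, 2 * (t + 2) + a i, by rw [Sym2.map_mk, hσ, hσ, ← fin5_aux2, Sym2.eq_swap]⟩
  · rintro ⟨i, t, h⟩
    refine ⟨i, 3 * (t - a i) - 2, Sym2.map.injective σ.injective ?_⟩
    rw [← h, Sym2.map_mk, hσ, hσ, fin5_aux2 (3 * (t - a i) - 2), sub_add_cancel, fin5_aux3,
      Sym2.eq_swap]

/-- **Theorem 1.** Let `n = 5k` with `k ≥ 2`. If the `n` vertices are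
partitioned into `k` blocks of five (given by the injective map
`(i, j) ↦ v i j`, which is bijective since `n = 5k`), each block carries a
drawn `K₅`, all edges between blocks are uncolored, and PI (green) is to move,
then PII (red, the non-mover) has a winning strategy. -/
theorem drawn_K5_partition_secondPlayerWin (k : ℕ) (hk : 2 ≤ k) (n : ℕ) (hn : n = 5 * k)
    (v : Fin k → Fin 5 → Fin n)
    (hv : Function.Injective (fun p : Fin k × Fin 5 => v p.1 p.2)) :
    NonMoverWins (Finset.univ.biUnion fun i => greenK5 (v i))
      (Finset.univ.biUnion fun i => redK5 (v i)) := by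
  have hbij : Function.Bijective (fun p : Fin k × Fin 5 => v p.1 p.2) := by
    rw [Fintype.bijective_iff_injective_and_card]
    refine ⟨hv, ?_⟩
    simp [hn, mul_comm]
  have hinj : ∀ i j x y, v i x = v j y → i = j ∧ x = y := by
    intro i j x y h
    have := @hv (i, x) (j, y) h
    simpa using this
  have hn6 : 6 ≤ n := by omega
  -- the colour-swapping permutations
  have hperm : ∀ a : Fin k → Fin 5, ∃ σ : Equiv.Perm (Fin n),
      ∀ i t, σ (v i t) = v i (2 * t + a i) := by
    intro a
    let E := Equiv.ofBijective _ hbij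
    refine ⟨(E.symm.trans (blockPerm a)).trans E, fun i t => ?_⟩
    have h : E.symm (v i t) = (i, t) := by
      rw [Equiv.symm_apply_eq]
      rfl
    simp only [Equiv.trans_apply, h]
    rfl
  -- edges between different blocks are uncoloured
  have hcrossG : ∀ i j x y, i ≠ j →
      s(v i x, v j y) ∉ (Finset.univ.biUnion fun i => greenK5 (v i)) := by
    intro i j x y hij h
    obtain ⟨l, t, h⟩ := (mem_green v _).1 h
    rw [Sym2.eq_iff] at h
    rcases h with ⟨h1, h2⟩ | ⟨h1, h2⟩
    · exact hij ((hinj _ _ _ _ h1).1.symm.trans (hinj _ _ _ _ h2).1)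
    · exact hij ((hinj _ _ _ _ h2).1.symm.trans (hinj _ _ _ _ h1).1)
  have hcrossR : ∀ i j x y, i ≠ j →
      s(v i x, v j y) ∉ (Finset.univ.biUnion fun i => redK5 (v i)) := by
    intro i j x y hij h
    obtain ⟨l, t, h⟩ := (mem_red v _).1 h
    rw [Sym2.eq_iff] at h
    rcases h with ⟨h1, h2⟩ | ⟨h1, h2⟩
    · exact hij ((hinj _ _ _ _ h1).1.symm.trans (hinj _ _ _ _ h2).1)
    · exact hij ((hinj _ _ _ _ h2).1.symm.trans (hinj _ _ _ _ h1).1)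
  have hgreen : ∀ i t, s(v i t, v i (t + 1)) ∈ (Finset.univ.biUnion fun i => greenK5 (v i)) :=
    fun i t => (mem_green v _).2 ⟨i, t, rfl⟩
  have hred : ∀ i t, s(v i t, v i (t + 2)) ∈ (Finset.univ.biUnion fun i => redK5 (v i)) :=
    fun i t => (mem_red v _).2 ⟨i, t, rfl⟩
  have hG' := fun σ a => permEdges_green v σ a
  have hR' := fun σ a => permEdges_red v σ a
  generalize (Finset.univ.biUnion fun i => greenK5 (v i)) = G at *
  generalize (Finset.univ.biUnion fun i => redK5 (v i)) = R at *
  -- available edges are exactly the cross edges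
  have havail : ∀ e ∈ avail G R, ∃ i j x y, i ≠ j ∧ e = s(v i x, v j y) := by
    intro e he
    rw [mem_avail'] at he
    induction e using Sym2.ind with
    | _ p q =>
      obtain ⟨⟨i, x⟩, rfl⟩ := hbij.2 p
      obtain ⟨⟨j, y⟩, rfl⟩ := hbij.2 q
      refine ⟨i, j, x, y, ?_, rfl⟩
      rintro rfl
      obtain ⟨h1, h2, h3⟩ := he
      have hxy : x ≠ y := by
        rintro rfl
        simp at h1
      rcases fin5_aux5 x y hxy with rfl | rfl | rfl | rfl
      · exact h2 (hgreen _ _)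
      · exact h2 (by simpa only [Sym2.eq_swap] using hgreen i y)
      · exact h3 (hred _ _)
      · exact h3 (by simpa only [Sym2.eq_swap] using hred i y)
  have hi01 : (⟨0, by omega⟩ : Fin k) ≠ ⟨1, by omega⟩ := by simp
  refine ⟨⟨s(v ⟨0, by omega⟩ 0, v ⟨1, by omega⟩ 0), mem_avail'.2
    ⟨?_, hcrossG _ _ _ _ hi01, hcrossR _ _ _ _ hi01⟩⟩, ?_⟩
  · rw [Sym2.mk_isDiag_iff]
    exact fun h => hi01 (hinj _ _ _ _ h).1
  intro e he hes
  by_contra hnot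
  -- the set-up for any green move `e`
  obtain ⟨i, j, x, y, hij, rfl⟩ := havail e he
  obtain ⟨σ, hσ⟩ := hperm (fun l => if l = i then -x else if l = j then 1 - y else 0)
  have hσG := hG' σ _ hσ
  have hσR := hR' σ _ hσ
  have hσe : Sym2.map σ s(v i x, v j y) = s(v i x, v j (y + 1)) := by
    rw [Sym2.map_mk, hσ, hσ]
    simp only [if_true, if_neg hij.symm, fin5_aux6, fin5_aux7]
  have hRG : ¬ HasTriangle R := by
    rw [← hσG, hasTriangle_perm]
    exact fun h => hes (h.mono' (Finset.subset_insert _ _))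
  have hcs : ¬ HasTriangle (insert s(v i x, v j (y + 1)) R) := by
    rwa [← hσG, ← hσe, ← permEdges_insert, hasTriangle_perm]
  have hN : NonMoverWins R (insert s(v i x, v j y) G) :=
    (determined hn6 _ _ _ le_rfl hRG hes).resolve_left hnot
  have hdead : HasTriangle (insert s(v i x, v j (y + 1)) (insert s(v i x, v j y) G)) := by
    refine ⟨v i x, v j y, v j (y + 1), ?_, ?_, ?_, by simp, by simp, ?_⟩
    · exact fun h => hij (hinj _ _ _ _ h).1
    · exact fun h => hij (hinj _ _ _ _ h).1
    · exact fun h => fin5_aux8 y (hinj _ _ _ _ h).2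
    · simp [hgreen j y]
  have h1 := give_dead hn6 _ _ _ _ le_rfl hcs hes hdead hN
  have h2 := nonMoverWins_perm σ hN
  rw [permEdges_insert, hσG, hσR, hσe] at h2
  refine not_both (h2.2 s(v i x, v j y) ?_ hes) h1
  rw [mem_avail'] at he ⊢
  refine ⟨he.1, he.2.1, ?_⟩
  rw [Finset.mem_insert, not_or]
  refine ⟨fun h => ?_, he.2.2⟩
  rw [Sym2.eq_iff] at h
  rcases h with ⟨_, h⟩ | ⟨h, _⟩
  · exact fin5_aux8 y (hinj _ _ _ _ h).2
  · exact hij (hinj _ _ _ _ h).1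
end

section
/- In the game 7-Sim, consider the position consisting of a drawn K_5 on 5 of the 7 vertices, with all other edges of K_7 uncolored and PI to move. Then PI has a winning strategy from this position. -/
/-! ### Relabelling the vertices -/

lemma hasTriangle_image {n : ℕ} (σ : Equiv.Perm (Fin n)) {S : Finset (Sym2 (Fin n))}
    (h : HasTriangle S) : HasTriangle (S.image (Sym2.map σ)) := by
  obtain ⟨a, b, c, hab, hac, hbc, h1, h2, h3⟩ := h
  refine ⟨σ a, σ b, σ c, σ.injective.ne hab, σ.injective.ne hac, σ.injective.ne hbc,
    ?_, ?_, ?_⟩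
  · exact Finset.mem_image.2 ⟨_, h1, by simp⟩
  · exact Finset.mem_image.2 ⟨_, h2, by simp⟩
  · exact Finset.mem_image.2 ⟨_, h3, by simp⟩

lemma image_symm_image {n : ℕ} (σ : Equiv.Perm (Fin n)) (S : Finset (Sym2 (Fin n))) :
    (S.image (Sym2.map σ)).image (Sym2.map σ.symm) = S := by
  rw [Finset.image_image, ← Sym2.map_comp]
  simp

lemma hasTriangle_image_iff {n : ℕ} (σ : Equiv.Perm (Fin n)) (S : Finset (Sym2 (Fin n))) :
    HasTriangle (S.image (Sym2.map σ)) ↔ HasTriangle S := by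
  refine ⟨fun h => ?_, hasTriangle_image σ⟩
  have := hasTriangle_image σ.symm h
  rwa [image_symm_image] at this

lemma mem_avail_image {n : ℕ} (σ : Equiv.Perm (Fin n)) (A B : Finset (Sym2 (Fin n)))
    (e : Sym2 (Fin n)) :
    Sym2.map σ e ∈ avail (A.image (Sym2.map σ)) (B.image (Sym2.map σ)) ↔ e ∈ avail A B := by
  have hi : Function.Injective (Sym2.map σ) := Sym2.map.injective σ.injective
  have hd : (Sym2.map σ e).IsDiag ↔ e.IsDiag := by
    induction e with
    | _ a b => simp
  simp only [avail, simEdges, Finset.mem_sdiff, Finset.mem_filter, Finset.mem_univ, true_and,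
    Finset.mem_union, hi.mem_finset_image, hd]

lemma moverWins_image {n : ℕ} (σ : Equiv.Perm (Fin n)) {A B : Finset (Sym2 (Fin n))}
    (h : MoverWins A B) :
    MoverWins (A.image (Sym2.map σ)) (B.image (Sym2.map σ)) := by
  induction h with
  | step own opp e he hsafe hne hreplies ih =>
    refine MoverWins.step _ _ (Sym2.map σ e) ((mem_avail_image σ _ _ _).2 he) ?_ ?_ ?_
    · rwa [← Finset.image_insert, hasTriangle_image_iff]
    · obtain ⟨f, hf⟩ := hne
      refine ⟨Sym2.map σ f, ?_⟩
      rw [← Finset.image_insert]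
      exact (mem_avail_image σ _ _ _).2 hf
    · intro f hf hT
      obtain ⟨f, rfl⟩ : ∃ g, f = Sym2.map σ g :=
        ⟨Sym2.map σ.symm f, by rw [Sym2.map_map]; simp⟩
      rw [← Finset.image_insert] at hf hT ⊢
      rw [← Finset.image_insert]
      exact ih f ((mem_avail_image σ _ _ _).1 hf) (by rwa [hasTriangle_image_iff] at hT)

/-! ### Bitmask encoding of positions -/

/-- Bit position of an edge. -/
def edgeCode (e : Sym2 (Fin 7)) : ℕ :=
  Sym2.lift ⟨fun a b => 7 * (min a b).val + (max a b).val, by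
    intro a b; simp only [min_comm, max_comm]⟩ e

lemma edgeCode_inj : Function.Injective edgeCode := by
  intro e f
  revert e f
  decide +kernel

/-- The edge set encoded by a bitmask. -/
def decodeEdges (m : ℕ) : Finset (Sym2 (Fin 7)) :=
  Finset.univ.filter (fun e => m.testBit (edgeCode e) = true)

lemma insert_decodeEdges (m : ℕ) (e : Sym2 (Fin 7)) :
    insert e (decodeEdges m) = decodeEdges (m ||| 2 ^ edgeCode e) := by
  ext f
  simp only [decodeEdges, Finset.mem_insert, Finset.mem_filter, Finset.mem_univ, true_and,
    Nat.testBit_or, Nat.testBit_two_pow, Bool.or_eq_true, decide_eq_true_eq,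
    edgeCode_inj.eq_iff]
  tauto

/-- Bit positions of the edges of all triangles. -/
def triangleCodes : List (ℕ × ℕ × ℕ) :=
  [(9, 2, 1), (10, 3, 1), (11, 4, 1), (12, 5, 1), (13, 6, 1),
    (17, 3, 2), (18, 4, 2), (19, 5, 2), (20, 6, 2), (25, 4, 3),
    (26, 5, 3), (27, 6, 3), (33, 5, 4), (34, 6, 4), (41, 6, 5),
    (17, 10, 9), (18, 11, 9), (19, 12, 9), (20, 13, 9), (25, 11, 10),
    (26, 12, 10), (27, 13, 10), (33, 12, 11), (34, 13, 11), (41, 13, 12),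
    (25, 18, 17), (26, 19, 17), (27, 20, 17), (33, 19, 18), (34, 20, 18),
    (41, 20, 19), (33, 26, 25), (34, 27, 25), (41, 27, 26), (41, 34, 33)]

/-- Does the bitmask contain a triangle? -/
def maskTriangle (m : ℕ) : Bool :=
  triangleCodes.any fun t => m.testBit t.1 && (m.testBit t.2.1 && m.testBit t.2.2)

lemma triangleCodes_complete : ∀ a b c : Fin 7, a < b → b < c →
    (edgeCode s(b, c), edgeCode s(a, c), edgeCode s(a, b)) ∈ triangleCodes := by
  decide +kernel

lemma triangleCodes_sound : ∀ t ∈ triangleCodes, ∃ a b c : Fin 7, a < b ∧ b < c ∧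
    t = (edgeCode s(b, c), edgeCode s(a, c), edgeCode s(a, b)) := by
  decide +kernel

lemma hasTriangle_sorted {S : Finset (Sym2 (Fin 7))} (h : HasTriangle S) :
    ∃ a b c : Fin 7, a < b ∧ b < c ∧ s(a, b) ∈ S ∧ s(a, c) ∈ S ∧ s(b, c) ∈ S := by
  obtain ⟨a, b, c, hab, hac, hbc, h1, h2, h3⟩ := h
  have h1' := h1
  have h2' := h2
  have h3' := h3
  rw [Sym2.eq_swap] at h1' h2' h3'
  rcases lt_or_gt_of_ne hab with x | x <;> rcases lt_or_gt_of_ne hac with y | y <;>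
    rcases lt_or_gt_of_ne hbc with z | z
  · exact ⟨a, b, c, x, z, h1, h2, h3⟩
  · exact ⟨a, c, b, y, z, h2, h1, h3'⟩
  · exact absurd (x.trans z) y.not_gt
  · exact ⟨c, a, b, y, x, h2', h3', h1⟩
  · exact ⟨b, a, c, x, y, h1', h3, h2⟩
  · exact absurd (y.trans z) x.not_gt
  · exact ⟨b, c, a, z, y, h3, h1', h2'⟩
  · exact ⟨c, b, a, z, x, h3', h2', h1'⟩

lemma hasTriangle_decode (m : ℕ) : HasTriangle (decodeEdges m) ↔ maskTriangle m = true := by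
  simp only [maskTriangle, List.any_eq_true, Bool.and_eq_true]
  constructor
  · intro h
    obtain ⟨a, b, c, hab, hbc, h1, h2, h3⟩ := hasTriangle_sorted h
    simp only [decodeEdges, Finset.mem_filter, Finset.mem_univ, true_and] at h1 h2 h3
    exact ⟨_, triangleCodes_complete a b c hab hbc, h3, h2, h1⟩
  · rintro ⟨t, ht, h3, h2, h1⟩
    obtain ⟨a, b, c, hab, hbc, rfl⟩ := triangleCodes_sound t ht
    refine ⟨a, b, c, hab.ne, (hab.trans hbc).ne, hbc.ne, ?_, ?_, ?_⟩ <;>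
      simpa [decodeEdges]

/-- All bit positions of edges of `K 7`, the interesting ones first. -/
def allCodes : List ℕ :=
  [41, 26, 12, 27, 34, 19, 20, 5, 13, 6, 33, 1, 2, 3, 4, 9, 10, 11, 17, 18, 25]

lemma allCodes_complete : ∀ e : Sym2 (Fin 7), ¬ e.IsDiag → edgeCode e ∈ allCodes := by
  decide +kernel

lemma allCodes_sound : ∀ i ∈ allCodes, ∃ e : Sym2 (Fin 7), ¬ e.IsDiag ∧ edgeCode e = i := by
  decide +kernel

lemma mem_avail_decode (g r : ℕ) (e : Sym2 (Fin 7)) :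
    e ∈ avail (decodeEdges g) (decodeEdges r) ↔
      ¬ e.IsDiag ∧ (g ||| r).testBit (edgeCode e) = false := by
  simp [avail, simEdges, decodeEdges]

/-- Exhaustive search for a winning strategy of the mover, with bounded depth;
the moves tried are taken from the list `allCodes`. -/
def searchWin : ℕ → ℕ → ℕ → Bool
  | 0, _, _ => false
  | k + 1, g, r => allCodes.any fun i =>
      !((g ||| r).testBit i) && (!(maskTriangle (g ||| 2 ^ i)) &&
        ((allCodes.any fun j => !((r ||| (g ||| 2 ^ i)).testBit j)) &&
          allCodes.all fun j => (r ||| (g ||| 2 ^ i)).testBit j || (maskTriangle (r ||| 2 ^ j) ||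
            searchWin k (g ||| 2 ^ i) (r ||| 2 ^ j))))

lemma searchWin_sound (k : ℕ) : ∀ g r : ℕ, searchWin k g r = true →
    MoverWins (decodeEdges g) (decodeEdges r) := by
  induction k with
  | zero => intro g r h; simp [searchWin] at h
  | succ k ih =>
    intro g r h
    rw [searchWin, List.any_eq_true] at h
    obtain ⟨i, hi, h⟩ := h
    obtain ⟨e, hed, rfl⟩ := allCodes_sound i hi
    simp only [Bool.and_eq_true, Bool.not_eq_true', List.any_eq_true, List.all_eq_true,
      Bool.or_eq_true] at h
    obtain ⟨h1, h2, ⟨j, hj, h3⟩, h4⟩ := h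
    refine MoverWins.step _ _ e ((mem_avail_decode _ _ _).2 ⟨hed, h1⟩) ?_ ?_ ?_
    · rw [insert_decodeEdges, hasTriangle_decode, h2]
      simp
    · obtain ⟨f, hfd, rfl⟩ := allCodes_sound j hj
      refine ⟨f, ?_⟩
      rw [insert_decodeEdges]
      exact (mem_avail_decode _ _ _).2 ⟨hfd, h3⟩
    · intro f hf hT
      rw [insert_decodeEdges] at hf hT ⊢
      rw [insert_decodeEdges]
      rw [hasTriangle_decode] at hT
      obtain ⟨hfd, hfa⟩ := (mem_avail_decode _ _ _).1 hf
      rcases h4 _ (allCodes_complete f hfd) with h | h | h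
      · rw [h] at hfa; simp at hfa
      · exact absurd h hT
      · exact ih _ _ h

lemma green_standard : greenK5 (Fin.castLE (by norm_num : 5 ≤ 7)) = decodeEdges 33686034 := by
  decide +kernel

lemma red_standard : redK5 (Fin.castLE (by norm_num : 5 ≤ 7)) = decodeEdges 265228 := by
  decide +kernel

lemma searchWin_standard : searchWin 6 33686034 265228 = true := by
  decide +kernel

lemma standard_win : MoverWins (greenK5 (Fin.castLE (by norm_num : 5 ≤ 7)))
    (redK5 (Fin.castLE (by norm_num : 5 ≤ 7))) := by
  rw [green_standard, red_standard]
  exact searchWin_sound 6 _ _ searchWin_standard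

lemma exists_perm_extending (v : Fin 5 → Fin 7) (hv : Function.Injective v) :
    ∃ σ : Equiv.Perm (Fin 7), ∀ i, σ (Fin.castLE (by norm_num : 5 ≤ 7) i) = v i := by
  have hc : Function.Injective (Fin.castLE (by norm_num : 5 ≤ 7)) := Fin.castLE_injective _
  let τ := (Equiv.ofInjective _ hc).symm.trans (Equiv.ofInjective v hv)
  refine ⟨τ.extendSubtype, fun i => ?_⟩
  rw [Equiv.extendSubtype_apply_of_mem _ _ (Set.mem_range_self i)]
  simp [τ]

/-- **Proposition (ii).** In 7-Sim, the position consisting of a drawn `K₅` on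
five of the seven vertices, all other edges uncolored, with PI (green) to
move, is a win for PI (the mover). -/
theorem drawn_K5_in_sevenSim_firstPlayerWin (v : Fin 5 → Fin 7)
    (hv : Function.Injective v) :
    MoverWins (greenK5 v) (redK5 v) := by
  obtain ⟨σ, hσ⟩ := exists_perm_extending v hv
  have hg : greenK5 v = (greenK5 (Fin.castLE (by norm_num : 5 ≤ 7))).image (Sym2.map σ) := by
    simp only [greenK5, Finset.image_image]
    congr 1
    funext i
    simp [hσ]
  have hr : redK5 v = (redK5 (Fin.castLE (by norm_num : 5 ≤ 7))).image (Sym2.map σ) := by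
    simp only [redK5, Finset.image_image]
    congr 1
    funext i
    simp [hσ]
  rw [hg, hr]
  exact moverWins_image σ standard_win
end
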